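/- For any reduced word u there is a largest reduced word sr(u), unique up to permutation, such that for every reduced word x: [u·x] ≼ u iff x ≼ sr(u). Moreover sr(u) is a commuting word, a reduced word x is right-absorbed by u iff x ≼ sr(u), and the final segment of u satisfies ũ ≼ sr(u). -/

import Mathlib

variable {V : Type*} [DecidableEq V] [Fintype V]

/-- A letter is a nonempty connected subset of the graph `G`
(connectedness of the induced subgraph includes nonemptiness). -/
def IsLetter (G : SimpleGraph V) (s : Finset V) : Prop :=
  (G.induce (↑s : Set V)).Connected

/-- The type of letters of `G`. -/
def Letter (G : SimpleGraph V) := {s : Finset V // IsLetter G s}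

/-- A word is a finite sequence of letters. -/
abbrev Word (G : SimpleGraph V) := List (Letter G)

/-- Two letters commute iff their union is not a letter (is disconnected). -/
def LCommute (G : SimpleGraph V) (s t : Letter G) : Prop :=
  ¬ IsLetter G (s.1 ∪ t.1)

/-- Two words commute if their letters pairwise commute. -/
def WCommute (G : SimpleGraph V) (u v : Word G) : Prop :=
  ∀ s ∈ u, ∀ t ∈ v, LCommute G s t

/-- One swap of two adjacent commuting letters. -/
def LSwapStep (G : SimpleGraph V) (w w' : Word G) : Prop :=
  ∃ (a b : Word G) (s t : Letter G), LCommute G s t ∧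
    w = a ++ s :: t :: b ∧ w' = a ++ t :: s :: b

/-- Equivalence (`≈`) of words: sequences of swaps of adjacent commuting letters. -/
def WEquiv (G : SimpleGraph V) : Word G → Word G → Prop :=
  Relation.ReflTransGen (LSwapStep G)

/-- A word is reduced if there is no pair of comparable letters such that the
smaller one commutes with all letters strictly in between. -/
def WIsReduced (G : SimpleGraph V) (w : Word G) : Prop :=
  ¬ ∃ (a b c : Word G) (s t : Letter G),
      w = a ++ s :: (b ++ t :: c) ∧
      ((s.1 ⊆ t.1 ∧ ∀ r ∈ b, LCommute G s r) ∨
       (t.1 ⊆ s.1 ∧ ∀ r ∈ b, LCommute G t r))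

/-- A splitting of a letter `s`: a (possibly empty) word whose letters are
proper subsets of `s`. -/
def IsSplitting (G : SimpleGraph V) (x : Word G) (s : Letter G) : Prop :=
  ∀ t ∈ x, t.1 ⊂ s.1

/-- `SplitStep G u v`: `u` is obtained from `v` by replacing one occurrence of a
letter by a splitting of it. -/
def SplitStep (G : SimpleGraph V) (u v : Word G) : Prop :=
  ∃ (a b x : Word G) (s : Letter G),
    v = a ++ s :: b ∧ IsSplitting G x s ∧ u = a ++ x ++ b

/-- One step of the splitting order up to equivalence. -/
def PrecStep (G : SimpleGraph V) (u v : Word G) : Prop :=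
  ∃ u' v', WEquiv G v v' ∧ SplitStep G u' v' ∧ WEquiv G u u'

/-- The splitting order `≺` on words. -/
def WPrec (G : SimpleGraph V) : Word G → Word G → Prop :=
  Relation.TransGen (PrecStep G)

/-- `u ≼ v` : `u ≺ v` or `u ≈ v`. -/
def WPreceq (G : SimpleGraph V) (u v : Word G) : Prop :=
  WPrec G u v ∨ WEquiv G u v

/-- Absorption: if `s ⊆ t`, replace a subword `s·t` (or `t·s`) by `t`. -/
def AbsorbStep (G : SimpleGraph V) (w w' : Word G) : Prop :=
  ∃ (a b : Word G) (s t : Letter G), s.1 ⊆ t.1 ∧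
    (w = a ++ s :: t :: b ∨ w = a ++ t :: s :: b) ∧ w' = a ++ t :: b

/-- A non-splitting reduction step: Commutation or Absorption. -/
def NSStep (G : SimpleGraph V) (w w' : Word G) : Prop :=
  LSwapStep G w w' ∨ AbsorbStep G w w'

/-- `NSRed G u v`: `v` is a non-splitting reduction of `u`, i.e. a reduced word
obtained from `u` by Commutation and Absorption steps only. -/
def NSRed (G : SimpleGraph V) (u v : Word G) : Prop :=
  Relation.ReflTransGen (NSStep G) u v ∧ WIsReduced G v

/-- The letter `t` is left-absorbed by the word `w`: `t` is contained in some
letter of `w` and commutes with all earlier letters. -/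
def LetterLeftAbsorbed (G : SimpleGraph V) (t : Letter G) (w : Word G) : Prop :=
  ∃ (a b : Word G) (s : Letter G), w = a ++ s :: b ∧ t.1 ⊆ s.1 ∧ ∀ r ∈ a, LCommute G t r

/-- The letter `t` is right-absorbed by the word `w`. -/
def LetterRightAbsorbed (G : SimpleGraph V) (t : Letter G) (w : Word G) : Prop :=
  ∃ (a b : Word G) (s : Letter G), w = a ++ s :: b ∧ t.1 ⊆ s.1 ∧ ∀ r ∈ b, LCommute G t r

/-- The letter `t` is properly left-absorbed by the word `w`. -/
def LetterProperLeftAbsorbed (G : SimpleGraph V) (t : Letter G) (w : Word G) : Prop :=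
  ∃ (a b : Word G) (s : Letter G), w = a ++ s :: b ∧ t.1 ⊂ s.1 ∧ ∀ r ∈ a, LCommute G t r

/-- The letter `t` is properly right-absorbed by the word `w`. -/
def LetterProperRightAbsorbed (G : SimpleGraph V) (t : Letter G) (w : Word G) : Prop :=
  ∃ (a b : Word G) (s : Letter G), w = a ++ s :: b ∧ t.1 ⊂ s.1 ∧ ∀ r ∈ b, LCommute G t r

/-- A word `u` is left-absorbed by `w` if each of its letters is. -/
def LeftAbsorbed (G : SimpleGraph V) (u w : Word G) : Prop :=
  ∀ t ∈ u, LetterLeftAbsorbed G t w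

/-- A word `u` is right-absorbed by `w` if each of its letters is. -/
def RightAbsorbed (G : SimpleGraph V) (u w : Word G) : Prop :=
  ∀ t ∈ u, LetterRightAbsorbed G t w

/-- A word `u` is properly left-absorbed by `w` if each of its letters is. -/
def ProperLeftAbsorbed (G : SimpleGraph V) (u w : Word G) : Prop :=
  ∀ t ∈ u, LetterProperLeftAbsorbed G t w

/-- A word `u` is properly right-absorbed by `w` if each of its letters is. -/
def ProperRightAbsorbed (G : SimpleGraph V) (u w : Word G) : Prop :=
  ∀ t ∈ u, LetterProperRightAbsorbed G t w

/-- A commuting word: its letters pairwise commute. -/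
def IsCommuting (G : SimpleGraph V) (u : Word G) : Prop :=
  List.Pairwise (LCommute G) u

/-- The letter `s` is an end of the word `u` if `u ≈ v·s` for some `v`. -/
def IsEnd (G : SimpleGraph V) (s : Letter G) (u : Word G) : Prop :=
  ∃ v, WEquiv G u (v ++ [s])

/-- `t` is the final segment of `u`: the commuting word consisting of all ends of `u`. -/
def IsFinalSegment (G : SimpleGraph V) (t u : Word G) : Prop :=
  IsCommuting G t ∧ ∀ s, s ∈ t ↔ IsEnd G s u

/-!
The letters right-absorbed by `u` are finitely many and closed under connected unions, so the
maximal ones pairwise commute: listed in any order they form `sr(u)`. A reduced word `x` lies below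
a commuting word iff each letter of `x` is contained in one of its letters, so `x ≼ sr(u)` says
exactly that `x` is right-absorbed by `u`, and then `[u·x] = u`. Conversely, if some letter `t` of
`x` is not right-absorbed by `u`, then `[u·t]` arises from `u` by replacing a splitting of `t` by
`t`, so `u ≺ [u·t] ≼ u·x`. Non-splitting reduction keeps the reduced words below a given word, so
`[u·t] ≼ [u·x]`, and `[u·x] ≼ u` would give `u ≺ u`. This is impossible, since replacing a letter
by finitely many smaller ones is a well-founded relation on multisets of letters.
-/

section Letters

omit [Fintype V]

variable {G : SimpleGraph V} {r s t : Letter G}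

instance : PartialOrder (Letter G) := inferInstanceAs (PartialOrder {s // IsLetter G s})

instance : WellFoundedLT (Letter G) := ⟨InvImage.wf Subtype.val wellFounded_lt⟩

omit [DecidableEq V] in
theorem Letter.nonempty (s : Letter G) : s.1.Nonempty :=
  Set.nonempty_coe_sort.1 s.2.nonempty

omit [DecidableEq V] in
theorem Letter.ssubset_of_subset_of_ne (hst : s.1 ⊆ t.1) (hne : s ≠ t) : s.1 ⊂ t.1 :=
  Finset.ssubset_iff_subset_ne.2 ⟨hst, fun h => hne (Subtype.ext h)⟩

theorem lCommute_iff : LCommute G s t ↔ ∀ x ∈ s.1, ∀ y ∈ t.1, x ≠ y ∧ ¬ G.Adj x y := by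
  have hs := s.2.preconnected
  have ht := t.2.preconnected
  rw [LCommute, IsLetter, Finset.coe_union]
  constructor
  · refine fun h x hx y hy => ⟨?_, fun hxy => ?_⟩
    · rintro rfl
      exact h (SimpleGraph.induce_union_connected hs ht ⟨x, hx, hy⟩)
    · exact h (SimpleGraph.connected_induce_union hs ht hx hy hxy)
  · intro h hst
    obtain ⟨x, hx⟩ := s.nonempty
    obtain ⟨y, hy⟩ := t.nonempty
    obtain ⟨walk⟩ := hst.preconnected ⟨x, .inl hx⟩ ⟨y, .inr hy⟩
    obtain ⟨d, -, hfst, hsnd⟩ := walk.exists_boundary_dart {z | z.1 ∈ s.1} hx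
      fun hys => (h y hys y hy).1 rfl
    exact (h _ hfst _ (d.snd.2.resolve_left hsnd)).2 d.adj

theorem LCommute.symm (h : LCommute G s t) : LCommute G t s := by
  rwa [LCommute, Finset.union_comm]

theorem LCommute.not_subset (h : LCommute G s t) : ¬ s.1 ⊆ t.1 := by
  intro hst
  rw [LCommute, Finset.union_eq_right.2 hst] at h
  exact h t.2

theorem LCommute.mono_left (hst : s.1 ⊆ t.1) (h : LCommute G t r) : LCommute G s r :=
  lCommute_iff.2 fun x hx => lCommute_iff.1 h x (hst hx)

theorem LCommute.mono_right (hst : s.1 ⊆ t.1) (h : LCommute G r t) : LCommute G r s :=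
  (h.symm.mono_left hst).symm

theorem LCommute.union_left (hst : IsLetter G (s.1 ∪ t.1)) (hs : LCommute G s r)
    (ht : LCommute G t r) : LCommute G ⟨s.1 ∪ t.1, hst⟩ r :=
  lCommute_iff.2 fun x hx =>
    (Finset.mem_union.1 hx).elim (lCommute_iff.1 hs x) (lCommute_iff.1 ht x)

end Letters

section Equivalence

omit [Fintype V]

variable {G : SimpleGraph V} {u v w u' v' : Word G}

theorem LSwapStep.symm (h : LSwapStep G u v) : LSwapStep G v u := by
  obtain ⟨a, b, s, t, hst, rfl, rfl⟩ := h
  exact ⟨a, b, t, s, hst.symm, rfl, rfl⟩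

theorem LSwapStep.perm (h : LSwapStep G u v) : u.Perm v := by
  obtain ⟨a, b, s, t, -, rfl, rfl⟩ := h
  exact (List.Perm.swap t s b).append_left a

theorem LSwapStep.append_left (c : Word G) (h : LSwapStep G u v) :
    LSwapStep G (c ++ u) (c ++ v) := by
  obtain ⟨a, b, s, t, hst, rfl, rfl⟩ := h
  exact ⟨c ++ a, b, s, t, hst, by simp, by simp⟩

theorem LSwapStep.append_right (c : Word G) (h : LSwapStep G u v) :
    LSwapStep G (u ++ c) (v ++ c) := by
  obtain ⟨a, b, s, t, hst, rfl, rfl⟩ := h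
  exact ⟨a, b ++ c, s, t, hst, by simp, by simp⟩

theorem LSwapStep.induction_concat {P : Word G → Word G → Prop} (h : LSwapStep G u v)
    (swap : ∀ a s t, LCommute G s t → P (a ++ [s] ++ [t]) (a ++ [t] ++ [s]))
    (concat : ∀ u v r, LSwapStep G u v → P u v → P (u ++ [r]) (v ++ [r])) : P u v := by
  obtain ⟨a, b, s, t, hst, rfl, rfl⟩ := h
  induction b using List.reverseRecOn with
  | nil => simpa using swap a s t hst
  | append_singleton b r ih => simpa using concat _ _ r ⟨a, b, s, t, hst, rfl, rfl⟩ ih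

theorem WEquiv.refl (u : Word G) : WEquiv G u u := Relation.ReflTransGen.refl

theorem WEquiv.trans (h : WEquiv G u v) (h' : WEquiv G v w) : WEquiv G u w :=
  Relation.ReflTransGen.trans h h'

theorem WEquiv.symm (h : WEquiv G u v) : WEquiv G v u :=
  have : Std.Symm (LSwapStep G) := ⟨fun _ _ => LSwapStep.symm⟩
  Relation.ReflTransGen.stdSymm.symm _ _ h

theorem WEquiv.perm (h : WEquiv G u v) : u.Perm v := by
  induction h with
  | refl => exact .refl _
  | tail _ h ih => exact ih.trans h.perm

theorem WEquiv.append (h : WEquiv G u v) (h' : WEquiv G u' v') :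
    WEquiv G (u ++ u') (v ++ v') :=
  (Relation.ReflTransGen.lift (· ++ u') (fun _ _ => LSwapStep.append_right u') _ _ h).trans
    (Relation.ReflTransGen.lift (v ++ ·) (fun _ _ => LSwapStep.append_left v) _ _ h')

theorem wEquiv_cons_concat {s : Letter G} (h : ∀ r ∈ u, LCommute G s r) :
    WEquiv G (s :: u) (u ++ [s]) := by
  induction u with
  | nil => exact .refl _
  | cons r u ih =>
    rw [List.forall_mem_cons] at h
    exact .head ⟨[], u, s, r, h.1, rfl, rfl⟩ ((WEquiv.refl [r]).append (ih h.2))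

theorem WCommute.wEquiv_append (h : WCommute G u v) : WEquiv G (u ++ v) (v ++ u) := by
  induction u with
  | nil => simpa using WEquiv.refl v
  | cons s u ih =>
    rw [WCommute, List.forall_mem_cons] at h
    have htail : WEquiv G (s :: u ++ v) (s :: v ++ u) := (WEquiv.refl [s]).append (ih h.2)
    simpa using htail.trans ((wEquiv_cons_concat h.1).append (.refl u))

theorem wEquiv_filter_append_filter_not (p : Letter G → Prop) [DecidablePred p]
    (h : ∀ s ∈ u, ∀ t ∈ u, p s → ¬ p t → LCommute G s t) :
    WEquiv G u (u.filter p ++ u.filter (¬ p ·)) := by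
  induction u with
  | nil => exact .refl _
  | cons r u ih =>
    have hr := (WEquiv.refl [r]).append <|
      ih fun s hs t ht => h s (.tail _ hs) t (.tail _ ht)
    by_cases hpr : p r
    · simpa [List.filter_cons, hpr] using hr
    · have hcomm : ∀ s ∈ u.filter p, LCommute G r s := by
        intro s hs
        obtain ⟨hsu, hps⟩ := List.mem_filter.1 hs
        exact (h s (.tail _ hsu) r (.head _) (of_decide_eq_true hps) hpr).symm
      have hmove := (wEquiv_cons_concat hcomm).append (.refl (u.filter (¬ p ·)))
      simpa [List.filter_cons, hpr] using hr.trans hmove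

end Equivalence

section ReducedWords

omit [Fintype V]

variable {G : SimpleGraph V} {u v w : Word G} {s t : Letter G} {P : Letter G → Prop}

/-- The letter `t`, entering `w` from the right, can be commuted past letters of `w` until it meets
one satisfying `P`. For `P s := t ⊆ s` this says that `t` is right-absorbed by `w`, for
`P s := (s = t)` it says that some occurrence of `t` in `w` can be commuted to the end. -/
def CommutesBackTo (G : SimpleGraph V) (t : Letter G) (P : Letter G → Prop) (w : Word G) : Prop :=
  ∃ a b s, w = a ++ s :: b ∧ P s ∧ ∀ r ∈ b, LCommute G t r

theorem commutesBackTo_concat :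
    CommutesBackTo G t P (w ++ [s]) ↔ P s ∨ LCommute G t s ∧ CommutesBackTo G t P w := by
  constructor
  · rintro ⟨a, b, p, h, hp, hb⟩
    rcases b.eq_nil_or_concat' with rfl | ⟨b, q, rfl⟩
    · obtain ⟨-, hsp⟩ := List.append_inj' h rfl
      exact .inl (List.singleton_inj.1 hsp ▸ hp)
    · rw [← List.cons_append, ← List.append_assoc] at h
      obtain ⟨rfl, hsq⟩ := List.append_inj' h rfl
      obtain rfl := List.singleton_inj.1 hsq
      exact .inr ⟨hb s (by simp), a, b, p, rfl, hp, fun r hr => hb r (by simp [hr])⟩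
  · rintro (hs | ⟨hts, a, b, p, rfl, hp, hb⟩)
    · exact ⟨w, [], s, rfl, hs, by simp⟩
    · exact ⟨a, b ++ [s], p, by simp, hp, by simpa [or_imp, forall_and] using ⟨hb, hts⟩⟩

theorem letterRightAbsorbed_concat :
    LetterRightAbsorbed G t (w ++ [s]) ↔ t.1 ⊆ s.1 ∨ LCommute G t s ∧ LetterRightAbsorbed G t w :=
  commutesBackTo_concat

theorem LSwapStep.commutesBackTo (hP : ∀ s, P s → t.1 ⊆ s.1) (h : LSwapStep G u v) :
    CommutesBackTo G t P u → CommutesBackTo G t P v := by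
  refine h.induction_concat (P := fun u v => CommutesBackTo G t P u → CommutesBackTo G t P v) ?_ ?_
  · intro a s r hsr
    have hs : P s → LCommute G t r := fun h => hsr.mono_left (hP s h)
    have hr : P r → LCommute G t s := fun h => hsr.symm.mono_left (hP r h)
    simp only [commutesBackTo_concat]
    tauto
  · intro u v r _ ih
    simp only [commutesBackTo_concat]
    tauto

theorem LSwapStep.letterRightAbsorbed (h : LSwapStep G u v) :
    LetterRightAbsorbed G t u → LetterRightAbsorbed G t v :=
  h.commutesBackTo fun _ => id

theorem WEquiv.letterRightAbsorbed (h : WEquiv G u v) (ht : LetterRightAbsorbed G t u) :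
    LetterRightAbsorbed G t v := by
  induction h with
  | refl => exact ht
  | tail _ h ih => exact h.letterRightAbsorbed ih

theorem IsEnd.letterRightAbsorbed (h : IsEnd G s u) : LetterRightAbsorbed G s u := by
  obtain ⟨v, hv⟩ := h
  exact hv.symm.letterRightAbsorbed (letterRightAbsorbed_concat.2 (.inl subset_rfl))

theorem LetterRightAbsorbed.mono (hst : s.1 ⊆ t.1) (h : LetterRightAbsorbed G t u) :
    LetterRightAbsorbed G s u := by
  obtain ⟨a, b, r, rfl, htr, hb⟩ := h
  exact ⟨a, b, r, rfl, hst.trans htr, fun q hq => (hb q hq).mono_left hst⟩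

theorem LetterRightAbsorbed.union (hst : IsLetter G (s.1 ∪ t.1)) (hs : LetterRightAbsorbed G s u)
    (ht : LetterRightAbsorbed G t u) : LetterRightAbsorbed G ⟨s.1 ∪ t.1, hst⟩ u := by
  have hcomm : ¬ LCommute G s t := not_not_intro hst
  induction u using List.reverseRecOn with
  | nil => simp [LetterRightAbsorbed] at hs
  | append_singleton u r ih =>
    rw [letterRightAbsorbed_concat] at hs ht
    refine letterRightAbsorbed_concat.2 ?_
    rcases hs with hs | ⟨hsr, hs⟩ <;> rcases ht with ht | ⟨htr, ht⟩
    · exact .inl (Finset.union_subset hs ht)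
    · exact absurd (htr.mono_right hs).symm hcomm
    · exact absurd (hsr.mono_right ht) hcomm
    · exact .inr ⟨hsr.union_left hst htr, ih hs ht⟩

theorem WIsReduced.of_infix (hw : WIsReduced G w) (h : u <:+: w) : WIsReduced G u := by
  obtain ⟨x, y, rfl⟩ := h
  rintro ⟨a, b, c, s, t, rfl, h⟩
  exact hw ⟨x ++ a, b, c ++ y, s, t, by simp, h⟩

theorem wIsReduced_concat :
    WIsReduced G (w ++ [t]) ↔ WIsReduced G w ∧ ¬ LetterRightAbsorbed G t w ∧
      ∀ s, CommutesBackTo G s (· = s) w → ¬ s.1 ⊆ t.1 := by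
  constructor
  · refine fun h => ⟨h.of_infix (List.prefix_append _ _).isInfix, ?_, ?_⟩
    · rintro ⟨a, b, s, rfl, hts, hb⟩
      exact h ⟨a, b, [], s, t, by simp, .inr ⟨hts, hb⟩⟩
    · rintro _ ⟨a, b, s, rfl, rfl, hb⟩ hst
      exact h ⟨a, b, [], s, t, by simp, .inl ⟨hst, hb⟩⟩
  · rintro ⟨hw, habs, hend⟩ ⟨a, b, c, p, q, h, hpq⟩
    rcases c.eq_nil_or_concat' with rfl | ⟨c, r, rfl⟩
    · rw [← List.cons_append, ← List.append_assoc] at h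
      obtain ⟨rfl, htq⟩ := List.append_inj' h rfl
      obtain rfl := List.singleton_inj.1 htq
      exact hpq.elim (fun hpt => hend p ⟨a, b, p, rfl, rfl, hpt.2⟩ hpt.1)
        fun htp => habs ⟨a, b, p, rfl, htp.1, htp.2⟩
    · have h : w ++ [t] = (a ++ p :: (b ++ q :: c)) ++ [r] := by simpa using h
      exact hw ⟨a, b, c, p, q, (List.append_inj' h rfl).1, hpq⟩

theorem LSwapStep.wIsReduced (h : LSwapStep G u v) : WIsReduced G u → WIsReduced G v := by
  refine h.induction_concat (P := fun u v => WIsReduced G u → WIsReduced G v) ?_ ?_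
  · intro a s t hst
    have hs : ∀ r : Letter G, r.1 ⊆ s.1 → LCommute G r t := fun _ h => hst.mono_left h
    have ht : ∀ r : Letter G, r.1 ⊆ t.1 → LCommute G r s := fun _ h => hst.symm.mono_left h
    have hst' := hst.not_subset
    have hts := hst.symm.not_subset
    simp only [wIsReduced_concat, letterRightAbsorbed_concat, commutesBackTo_concat]
    grind
  · intro u v r huv ih
    simp only [wIsReduced_concat]
    refine fun ⟨hu, habs, hend⟩ => ⟨ih hu, fun h => habs (huv.symm.letterRightAbsorbed h), ?_⟩
    exact fun s hs => hend s (huv.symm.commutesBackTo (fun _ h => h ▸ subset_rfl) hs)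

theorem WEquiv.wIsReduced (h : WEquiv G u v) (hu : WIsReduced G u) : WIsReduced G v := by
  induction h with
  | refl => exact hu
  | tail _ h ih => exact h.wIsReduced ih

theorem IsCommuting.wIsReduced (h : IsCommuting G u) : WIsReduced G u := by
  rintro ⟨a, b, c, s, t, rfl, hst⟩
  have hcomm : LCommute G s t := by
    rw [IsCommuting, List.pairwise_append, List.pairwise_cons] at h
    exact h.2.1.1 t (by simp)
  exact hst.elim (fun hst => hcomm.not_subset hst.1) fun hts => hcomm.symm.not_subset hts.1

theorem WIsReduced.eq_singleton (hw : WIsReduced G w) (h : ∀ t ∈ w, t.1 ⊆ s.1) (hs : s ∈ w) :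
    w = [s] := by
  obtain ⟨a, b, rfl⟩ := List.append_of_mem hs
  have ha : a = [] := by
    refine a.eq_nil_or_concat'.resolve_right ?_
    rintro ⟨a, r, rfl⟩
    exact hw ⟨a, [], b, r, s, by simp, .inl ⟨h r (by simp), by simp⟩⟩
  have hb : b = [] := by
    refine List.eq_nil_iff_forall_not_mem.2 fun r hr => ?_
    obtain ⟨r, b, rfl⟩ := List.exists_cons_of_ne_nil (List.ne_nil_of_mem hr)
    exact hw ⟨a, [], b, s, r, by simp, .inr ⟨h r (by simp), by simp⟩⟩
  simp [ha, hb]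

/-- In `u·t ≈ k·d·t` the letters of `d` are absorbed by `t`, so `k·t` is the non-splitting reduct
of `u·t`. -/
theorem WIsReduced.exists_wEquiv_append_isSplitting {u : Word G} (hu : WIsReduced G u)
    (ht : ¬ LetterRightAbsorbed G t u) :
    ∃ k d : Word G, WEquiv G u (k ++ d) ∧ IsSplitting G d t ∧ WIsReduced G (k ++ [t]) := by
  by_cases hend : ∀ s, CommutesBackTo G s (· = s) u → ¬ s.1 ⊆ t.1
  · exact ⟨u, [], by simpa using WEquiv.refl u, by simp [IsSplitting],
      wIsReduced_concat.2 ⟨hu, ht, hend⟩⟩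
  · push Not at hend
    obtain ⟨_, ⟨a, b, s, rfl, rfl, hb⟩, hst⟩ := hend
    have hequiv : WEquiv G (a ++ s :: b) (a ++ b ++ [s]) := by
      simpa using (WEquiv.refl a).append (wEquiv_cons_concat hb)
    obtain ⟨hab, hs, -⟩ := wIsReduced_concat.1 (hequiv.wIsReduced hu)
    obtain ⟨k, d, hkd, hd, hkt⟩ :=
      hab.exists_wEquiv_append_isSplitting fun h => hs (h.mono hst)
    refine ⟨k, d ++ [s], ?_, ?_, hkt⟩
    · simpa using hequiv.trans (hkd.append (.refl _))
    · have hne : s ≠ t := fun h => ht ⟨a, b, s, rfl, h ▸ subset_rfl, h ▸ hb⟩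
      simpa [IsSplitting, or_imp, forall_and] using
        ⟨hd, Letter.ssubset_of_subset_of_ne hst hne⟩
termination_by u.length

end ReducedWords

section SplittingOrder

omit [Fintype V]

variable {G : SimpleGraph V} {u v w u' v' : Word G}

omit [DecidableEq V] in
theorem SplitStep.append_left (c : Word G) (h : SplitStep G u v) :
    SplitStep G (c ++ u) (c ++ v) := by
  obtain ⟨a, b, x, s, rfl, hx, rfl⟩ := h
  exact ⟨c ++ a, b, x, s, by simp, hx, by simp⟩

omit [DecidableEq V] in
theorem SplitStep.append_right (c : Word G) (h : SplitStep G u v) :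
    SplitStep G (u ++ c) (v ++ c) := by
  obtain ⟨a, b, x, s, rfl, hx, rfl⟩ := h
  exact ⟨a, b ++ c, x, s, by simp, hx, by simp⟩

/-- One elementary step of the preorder `≼`: a swap or the converse of a splitting. -/
def PreceqStep (G : SimpleGraph V) (u v : Word G) : Prop :=
  LSwapStep G u v ∨ SplitStep G u v

theorem SplitStep.wPrec (h : SplitStep G u v) : WPrec G u v :=
  .single ⟨u, v, .refl v, h, .refl u⟩

theorem WEquiv.wPrec_of_splitStep (h : WEquiv G u v) (h' : SplitStep G v w) : WPrec G u w :=
  .single ⟨v, w, .refl w, h', h⟩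

theorem WPrec.trans_wEquiv (h : WPrec G u v) (h' : WEquiv G v w) : WPrec G u w := by
  obtain ⟨x, hx, y, z, hvz, hyz, hxy⟩ := Relation.TransGen.tail'_iff.1 h
  exact .tail' hx ⟨y, z, h'.symm.trans hvz, hyz, hxy⟩

theorem wPreceq_iff_reflTransGen_preceqStep :
    WPreceq G u v ↔ Relation.ReflTransGen (PreceqStep G) u v := by
  constructor
  · have hequiv : WEquiv G ≤ Relation.ReflTransGen (PreceqStep G) :=
      Relation.ReflTransGen.mono fun _ _ => .inl
    rintro (h | h)
    · refine Relation.reflTransGen_closed ?_ _ _ h.to_reflTransGen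
      rintro u v ⟨u', v', hv, hsplit, hu⟩
      exact (hequiv _ _ hu).trans (.head (.inr hsplit) (hequiv _ _ hv.symm))
    · exact hequiv _ _ h
  · intro h
    induction h with
    | refl => exact .inr (.refl u)
    | tail _ hstep ih =>
      rcases ih with hlt | hequiv <;> rcases hstep with hswap | hsplit
      · exact .inl (hlt.trans_wEquiv (.single hswap))
      · exact .inl (Relation.TransGen.trans hlt hsplit.wPrec)
      · exact .inr (hequiv.tail hswap)
      · exact .inl (hequiv.wPrec_of_splitStep hsplit)

theorem PreceqStep.wPreceq (h : PreceqStep G u v) : WPreceq G u v :=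
  wPreceq_iff_reflTransGen_preceqStep.2 (.single h)

theorem WPreceq.refl (u : Word G) : WPreceq G u u := .inr (.refl u)

theorem WPreceq.trans (h : WPreceq G u v) (h' : WPreceq G v w) : WPreceq G u w := by
  rw [wPreceq_iff_reflTransGen_preceqStep] at *
  exact h.trans h'

theorem WPreceq.append (h : WPreceq G u v) (h' : WPreceq G u' v') :
    WPreceq G (u ++ u') (v ++ v') := by
  rw [wPreceq_iff_reflTransGen_preceqStep] at *
  exact (Relation.ReflTransGen.lift (· ++ u')
      (fun _ _ => .imp (.append_right u') (.append_right u')) _ _ h).trans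
    (Relation.ReflTransGen.lift (v ++ ·)
      (fun _ _ => .imp (.append_left v) (.append_left v)) _ _ h')

theorem wPreceq_of_sublist (h : u.Sublist v) : WPreceq G u v := by
  induction h with
  | slnil => exact .refl _
  | @cons u v s _ ih =>
    exact ih.trans (.inl (SplitStep.wPrec ⟨[], v, [], s, rfl, by simp [IsSplitting], rfl⟩))
  | cons_cons s _ ih => exact (WPreceq.refl [s]).append ih

omit [DecidableEq V] in
theorem SplitStep.cutExpand (h : SplitStep G u v) :
    Relation.CutExpand (· < ·) (u : Multiset (Letter G)) v := by
  obtain ⟨a, b, x, s, rfl, hx, rfl⟩ := h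
  refine ⟨x, s, hx, ?_⟩
  simp only [← Multiset.coe_add, ← Multiset.cons_coe, ← Multiset.singleton_add]
  abel

theorem PrecStep.cutExpand (h : PrecStep G u v) :
    Relation.CutExpand (· < ·) (u : Multiset (Letter G)) v := by
  obtain ⟨u', v', hv, hsplit, hu⟩ := h
  rw [Multiset.coe_eq_coe.2 hu.perm, Multiset.coe_eq_coe.2 hv.perm]
  exact hsplit.cutExpand

theorem WPrec.irrefl (u : Word G) : ¬ WPrec G u u := fun h =>
  wellFounded_lt.cutExpand.transGen.irrefl.irrefl _ <|
    Relation.TransGen.lift Multiset.ofList (fun _ _ => PrecStep.cutExpand) _ _ h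

theorem WPrec.not_wPreceq (h : WPrec G u v) : ¬ WPreceq G v u := fun h' =>
  WPrec.irrefl u (h'.elim (Relation.TransGen.trans h) h.trans_wEquiv)

theorem WPreceq.antisymm (h : WPreceq G u v) (h' : WPreceq G v u) : WEquiv G u v :=
  h.resolve_left fun h => h.not_wPreceq h'

end SplittingOrder

section Refinements

omit [DecidableEq V] [Fintype V]

variable {G : SimpleGraph V} {u v w x : Word G} {s t : Letter G}

/-- The words that may replace the letter `s` in passing to a smaller word: `s` itself and its
splittings. -/
def pieces (s : Letter G) : Language (Letter G) :=
  {x | x = [s] ∨ IsSplitting G x s}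

/-- The words obtained from `v` by replacing each letter by one of its pieces. Up to equivalence
these are the words `≼ v`. -/
def refinements (v : Word G) : Language (Letter G) :=
  (v.map pieces).prod

theorem refinements_nil : refinements ([] : Word G) = 1 := rfl

theorem refinements_cons : refinements (s :: v) = pieces s * refinements v := by
  simp [refinements]

theorem refinements_append : refinements (u ++ v) = refinements u * refinements v := by
  simp [refinements]

theorem refinements_singleton : refinements [s] = pieces s := by
  simp [refinements]

theorem self_mem_refinements (v : Word G) : v ∈ refinements v := by
  induction v with
  | nil => exact Language.nil_mem_one
  | cons s v ih => exact refinements_cons ▸ Language.append_mem_mul (a := [s]) (.inl rfl) ih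

theorem subset_of_mem_pieces (hx : x ∈ pieces s) (ht : t ∈ x) : t.1 ⊆ s.1 := by
  rcases hx with rfl | hx
  · rw [List.mem_singleton.1 ht]
  · exact (hx t ht).1

theorem exists_subset_of_mem_refinements (hw : w ∈ refinements v) (hs : s ∈ w) :
    ∃ t ∈ v, s.1 ⊆ t.1 := by
  induction v generalizing w with
  | nil => simp_all [refinements_nil]
  | cons t v ih =>
    rw [refinements_cons] at hw
    obtain ⟨x, hx, y, hy, rfl⟩ := hw
    rcases List.mem_append.1 hs with hs | hs
    · exact ⟨t, .head _, subset_of_mem_pieces hx hs⟩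
    · obtain ⟨r, hr, hsr⟩ := ih hy hs
      exact ⟨r, .tail _ hr, hsr⟩

theorem SplitStep.refinements_le (h : SplitStep G u v) : refinements u ≤ refinements v := by
  obtain ⟨a, b, x, s, rfl, hx, rfl⟩ := h
  have hpieces : refinements x ≤ pieces s := by
    refine fun w hw => .inr fun t ht => ?_
    obtain ⟨r, hr, htr⟩ := exists_subset_of_mem_refinements hw ht
    exact Finset.ssubset_of_subset_of_ssubset htr (hx r hr)
  rw [refinements_append, refinements_append, refinements_append, refinements_cons, ← mul_assoc]
  gcongr

end Refinements

section RefinementsOrder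

omit [Fintype V]

variable {G : SimpleGraph V} {a b c u v w x : Word G} {s t : Letter G}

theorem WIsReduced.mem_pieces (hx : WIsReduced G x) (h : ∀ t ∈ x, t.1 ⊆ s.1) : x ∈ pieces s := by
  by_cases hs : s ∈ x
  · exact .inl (hx.eq_singleton h hs)
  · exact .inr fun t ht => Letter.ssubset_of_subset_of_ne (h t ht) fun hts => hs (hts ▸ ht)

theorem wPreceq_of_mem_pieces (h : x ∈ pieces s) : WPreceq G x [s] := by
  rcases h with rfl | h
  · exact .refl _
  · exact .inl (SplitStep.wPrec ⟨[], [], x, s, rfl, h, by simp⟩)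

theorem wPreceq_of_mem_refinements (h : w ∈ refinements v) : WPreceq G w v := by
  induction v generalizing w with
  | nil => exact h ▸ .refl _
  | cons s v ih =>
    rw [refinements_cons] at h
    obtain ⟨x, hx, y, hy, rfl⟩ := h
    exact (wPreceq_of_mem_pieces hx).append (ih hy)

theorem LSwapStep.exists_mem_refinements (h : LSwapStep G u v) (hw : w ∈ refinements u) :
    ∃ w' ∈ refinements v, WEquiv G w w' := by
  obtain ⟨a, b, s, t, hst, rfl, rfl⟩ := h
  simp only [refinements_append, refinements_cons] at hw ⊢
  obtain ⟨wa, ha, _, ⟨x, hx, _, ⟨y, hy, wb, hb, rfl⟩, rfl⟩, rfl⟩ := hw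
  refine ⟨wa ++ (y ++ (x ++ wb)), ⟨wa, ha, _, ⟨y, hy, _, ⟨x, hx, wb, hb, rfl⟩, rfl⟩, rfl⟩, ?_⟩
  have hxy : WCommute G x y := fun p hp q hq =>
    (hst.mono_left (subset_of_mem_pieces hx hp)).mono_right (subset_of_mem_pieces hy hq)
  simpa using (WEquiv.refl wa).append (hxy.wEquiv_append.append (.refl wb))

theorem wPreceq_iff_exists_mem_refinements :
    WPreceq G w v ↔ ∃ w' ∈ refinements v, WEquiv G w w' := by
  constructor
  · rw [wPreceq_iff_reflTransGen_preceqStep]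
    intro h
    induction h with
    | refl => exact ⟨w, self_mem_refinements w, .refl w⟩
    | tail _ hstep ih =>
      obtain ⟨w', hw', hww'⟩ := ih
      rcases hstep with hswap | hsplit
      · obtain ⟨w'', hw'', hequiv⟩ := hswap.exists_mem_refinements hw'
        exact ⟨w'', hw'', hww'.trans hequiv⟩
      · exact ⟨w', hsplit.refinements_le hw', hww'⟩
  · rintro ⟨w', hw', hww'⟩
    exact .trans (.inr hww') (wPreceq_of_mem_refinements hw')

theorem WPreceq.exists_subset (h : WPreceq G u v) (hs : s ∈ u) : ∃ t ∈ v, s.1 ⊆ t.1 := by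
  obtain ⟨w, hw, huw⟩ := wPreceq_iff_exists_mem_refinements.1 h
  exact exists_subset_of_mem_refinements hw (huw.perm.mem_iff.1 hs)

theorem wPreceq_iff_forall_exists_subset (hv : IsCommuting G v) (hw : WIsReduced G w) :
    WPreceq G w v ↔ ∀ s ∈ w, ∃ t ∈ v, s.1 ⊆ t.1 := by
  refine ⟨fun h s => h.exists_subset, fun h => ?_⟩
  induction v generalizing w with
  | nil =>
    obtain rfl : w = [] := List.eq_nil_iff_forall_not_mem.2 fun s hs => by simpa using h s hs
    exact .refl _
  | cons t v ih =>
    obtain ⟨htv, hv⟩ := List.pairwise_cons.1 hv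
    have hnot : ∀ s ∈ w, ¬ s.1 ⊆ t.1 → ∃ r ∈ v, s.1 ⊆ r.1 := by
      intro s hs hst
      simpa [hst] using h s hs
    have hequiv := wEquiv_filter_append_filter_not (u := w) (·.1 ⊆ t.1) fun s _ r hr hst hrt => by
      obtain ⟨q, hq, hrq⟩ := hnot r hr hrt
      exact ((htv q hq).mono_left hst).mono_right hrq
    have hred := hequiv.wIsReduced hw
    have hfst : WPreceq G (w.filter (·.1 ⊆ t.1)) [t] := wPreceq_of_mem_pieces <|
      (hred.of_infix (List.prefix_append _ _).isInfix).mem_pieces (by simp)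
    have hsnd : WPreceq G (w.filter (¬ ·.1 ⊆ t.1)) v :=
      ih hv (hred.of_infix (List.suffix_append _ _).isInfix) (by simpa using hnot)
    exact .trans (.inr hequiv) (hfst.append hsnd)

theorem WIsReduced.wPreceq_append_singleton_append (hw : WIsReduced G w)
    (h : WPreceq G w (a ++ c ++ b)) (hc : ∀ s ∈ c, s.1 ⊆ t.1) : WPreceq G w (a ++ [t] ++ b) := by
  obtain ⟨w', hw', hww'⟩ := wPreceq_iff_exists_mem_refinements.1 h
  rw [refinements_append, refinements_append] at hw'
  obtain ⟨_, ⟨wa, ha, x, hx, rfl⟩, wb, hb, rfl⟩ := hw'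
  have hxt : x ∈ pieces t := by
    refine ((hww'.wIsReduced hw).of_infix ⟨wa, wb, rfl⟩).mem_pieces fun s hs => ?_
    obtain ⟨r, hr, hsr⟩ := exists_subset_of_mem_refinements hx hs
    exact hsr.trans (hc r hr)
  refine wPreceq_iff_exists_mem_refinements.2 ⟨_, ?_, hww'⟩
  rw [refinements_append, refinements_append, refinements_singleton]
  exact ⟨_, ⟨wa, ha, x, hxt, rfl⟩, wb, hb, rfl⟩

end RefinementsOrder

section NonSplittingReduction

omit [Fintype V]

variable {G : SimpleGraph V} {r u v w x : Word G}

theorem WIsReduced.wPreceq_of_nsStep (hw : WIsReduced G w) (h : WPreceq G w u)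
    (huv : NSStep G u v) : WPreceq G w v := by
  rcases huv with hswap | ⟨a, b, s, t, hst, rfl | rfl, rfl⟩
  · exact h.trans (PreceqStep.wPreceq (.inl hswap))
  · simpa using hw.wPreceq_append_singleton_append (c := [s, t]) (by simpa using h) (by simpa)
  · simpa using hw.wPreceq_append_singleton_append (c := [t, s]) (by simpa using h) (by simpa)

theorem WIsReduced.wPreceq_of_reflTransGen_nsStep (hw : WIsReduced G w) (h : WPreceq G w u)
    (huv : Relation.ReflTransGen (NSStep G) u v) : WPreceq G w v := by
  induction huv with
  | refl => exact h
  | tail _ hstep ih => exact hw.wPreceq_of_nsStep ih hstep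

theorem RightAbsorbed.reflTransGen_nsStep (h : RightAbsorbed G x u) :
    Relation.ReflTransGen (NSStep G) (u ++ x) u := by
  induction x with
  | nil => simpa using .refl
  | cons t x ih =>
    rw [RightAbsorbed, List.forall_mem_cons] at h
    refine .trans ?_ (ih h.2)
    obtain ⟨a, b, s, rfl, hts, hb⟩ := h.1
    have hequiv : WEquiv G (a ++ s :: b ++ t :: x) (a ++ s :: t :: (b ++ x)) := by
      simpa using
        (WEquiv.refl (a ++ [s])).append ((wEquiv_cons_concat hb).symm.append (.refl x))
    have habsorb : NSStep G (a ++ s :: t :: (b ++ x)) (a ++ s :: b ++ x) :=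
      .inr ⟨a, b ++ x, t, s, hts, .inr rfl, by simp⟩
    exact .tail (Relation.ReflTransGen.mono (fun _ _ => .inl) _ _ hequiv) habsorb

theorem WIsReduced.rightAbsorbed_of_wPreceq (hu : WIsReduced G u)
    (hr : Relation.ReflTransGen (NSStep G) (u ++ x) r) (hru : WPreceq G r u) :
    RightAbsorbed G x u := by
  intro t ht
  by_contra hnot
  obtain ⟨k, d, hud, hd, hkt⟩ := hu.exists_wEquiv_append_isSplitting hnot
  have hlt : WPrec G u (k ++ [t]) := hud.wPrec_of_splitStep ⟨k, [], d, t, rfl, hd, by simp⟩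
  have hku : WPreceq G k u := (wPreceq_of_sublist (List.sublist_append_left k d)).trans
    (.inr hud.symm)
  have hle : WPreceq G (k ++ [t]) (u ++ x) :=
    hku.append (wPreceq_of_sublist (List.singleton_sublist.2 ht))
  exact hlt.not_wPreceq ((hkt.wPreceq_of_reflTransGen_nsStep hle hr).trans hru)

theorem WIsReduced.exists_nsRed_wPreceq_iff (hu : WIsReduced G u) :
    (∃ r, NSRed G (u ++ x) r ∧ WPreceq G r u) ↔ RightAbsorbed G x u :=
  ⟨fun ⟨_, hr, hru⟩ => hu.rightAbsorbed_of_wPreceq hr.1 hru,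
    fun h => ⟨u, ⟨h.reflTransGen_nsStep, hu⟩, .refl u⟩⟩

end NonSplittingReduction

section RightStabilizer

omit [Fintype V]

variable {G : SimpleGraph V} {u x : Word G} {s : Letter G}

theorem finite_setOf_letterRightAbsorbed (u : Word G) :
    {s | LetterRightAbsorbed G s u}.Finite := by
  have hfin : (⋃ t ∈ {t | t ∈ u}, {s : Letter G | s.1 ∈ Set.Iic t.1}).Finite :=
    u.finite_toSet.biUnion fun t _ => (Set.finite_Iic t.1).preimage Subtype.val_injective.injOn
  refine hfin.subset ?_
  rintro s ⟨a, b, t, rfl, hst, -⟩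
  exact Set.mem_biUnion (x := t) (by simp) hst

/-- The word `sr(u)`: the maximal letters right-absorbed by `u`, listed in an arbitrary order. -/
noncomputable def rightStabilizer (u : Word G) : Word G :=
  ((finite_setOf_letterRightAbsorbed u).subset fun _ (h : Maximal _ _) => h.prop :
    {s | Maximal (LetterRightAbsorbed G · u) s}.Finite).toFinset.toList

theorem mem_rightStabilizer :
    s ∈ rightStabilizer u ↔ Maximal (LetterRightAbsorbed G · u) s := by
  simp [rightStabilizer]

theorem isCommuting_rightStabilizer (u : Word G) : IsCommuting G (rightStabilizer u) := by
  refine (Finset.nodup_toList _).pairwise_of_forall_ne fun s hs t ht hne hst => hne ?_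
  replace hs := mem_rightStabilizer.1 hs
  replace ht := mem_rightStabilizer.1 ht
  have hunion := hs.prop.union hst ht.prop
  exact (hs.eq_of_le hunion Finset.subset_union_left).trans
    (ht.eq_of_le hunion Finset.subset_union_right).symm

theorem letterRightAbsorbed_iff_exists_mem_rightStabilizer :
    LetterRightAbsorbed G s u ↔ ∃ t ∈ rightStabilizer u, s.1 ⊆ t.1 := by
  constructor
  · intro hs
    obtain ⟨t, hst, ht⟩ := (finite_setOf_letterRightAbsorbed u).exists_le_maximal hs
    exact ⟨t, mem_rightStabilizer.2 ht, hst⟩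
  · rintro ⟨t, ht, hst⟩
    exact (mem_rightStabilizer.1 ht).prop.mono hst

theorem WIsReduced.rightAbsorbed_iff (hx : WIsReduced G x) :
    RightAbsorbed G x u ↔ WPreceq G x (rightStabilizer u) := by
  simp only [wPreceq_iff_forall_exists_subset (isCommuting_rightStabilizer u) hx, RightAbsorbed,
    letterRightAbsorbed_iff_exists_mem_rightStabilizer]

theorem IsFinalSegment.wPreceq_rightStabilizer {t : Word G} (h : IsFinalSegment G t u) :
    WPreceq G t (rightStabilizer u) :=
  h.1.wIsReduced.rightAbsorbed_iff.1 fun s hs => ((h.2 s).1 hs).letterRightAbsorbed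

theorem WIsReduced.wEquiv_of_forall_wPreceq_iff {m m' : Word G} (hm : WIsReduced G m)
    (hm' : WIsReduced G m') (h : ∀ x, WIsReduced G x → (WPreceq G x m ↔ WPreceq G x m')) :
    WEquiv G m m' :=
  ((h m hm).1 (.refl m)).antisymm ((h m' hm').2 (.refl m'))

end RightStabilizer

omit [Fintype V] in
theorem sr_exists_general (G : SimpleGraph V) (u : Word G) (hu : WIsReduced G u) :
    ∃ m : Word G, WIsReduced G m ∧
      (∀ x : Word G, WIsReduced G x →
        ((∃ r, NSRed G (u ++ x) r ∧ WPreceq G r u) ↔ WPreceq G x m)) ∧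
      IsCommuting G m ∧
      (∀ x : Word G, WIsReduced G x → (RightAbsorbed G x u ↔ WPreceq G x m)) ∧
      (∀ t : Word G, IsFinalSegment G t u → WPreceq G t m) ∧
      (∀ m' : Word G, WIsReduced G m' →
        (∀ x : Word G, WIsReduced G x →
          ((∃ r, NSRed G (u ++ x) r ∧ WPreceq G r u) ↔ WPreceq G x m')) →
        WEquiv G m m') := by
  have hiff : ∀ x, WIsReduced G x →
      ((∃ r, NSRed G (u ++ x) r ∧ WPreceq G r u) ↔ WPreceq G x (rightStabilizer u)) :=
    fun x hx => hu.exists_nsRed_wPreceq_iff.trans hx.rightAbsorbed_iff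
  have hred := (isCommuting_rightStabilizer u).wIsReduced
  refine ⟨rightStabilizer u, hred, hiff, isCommuting_rightStabilizer u,
    fun x hx => hx.rightAbsorbed_iff, fun t ht => ht.wPreceq_rightStabilizer, fun m' hm' h => ?_⟩
  exact hred.wEquiv_of_forall_wPreceq_iff hm' fun x hx => (hiff x hx).symm.trans (h x hx)

/-- For any reduced word `u` there is a largest reduced word `sr(u)`, unique up
to permutation, such that for every reduced word `x`: `[u·x] ≼ u` iff
`x ≼ sr(u)`. Moreover `sr(u)` is commuting, a reduced word `x` is
right-absorbed by `u` iff `x ≼ sr(u)`, and the final segment of `u` satisfies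
`ũ ≼ sr(u)`. -/
theorem sr_exists (G : SimpleGraph V) (u : Word G) (hu : WIsReduced G u) :
    ∃ m : Word G, WIsReduced G m ∧
      (∀ x : Word G, WIsReduced G x →
        ((∃ r, NSRed G (u ++ x) r ∧ WPreceq G r u) ↔ WPreceq G x m)) ∧
      IsCommuting G m ∧
      (∀ x : Word G, WIsReduced G x → (RightAbsorbed G x u ↔ WPreceq G x m)) ∧
      (∀ t : Word G, IsFinalSegment G t u → WPreceq G t m) ∧
      (∀ m' : Word G, WIsReduced G m' →
        (∀ x : Word G, WIsReduced G x →
          ((∃ r, NSRed G (u ++ x) r ∧ WPreceq G r u) ↔ WPreceq G x m')) →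
        WEquiv G m m') :=
  sr_exists_general G u hu
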